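/- Let A be an m × n real matrix satisfying the Restricted Isometry Property of order 2k with constant ε ∈ (0,1), let C > 0, R > 0, and let D be a probability distribution on ℝⁿ × {−1,1} such that D-almost every (x,y) has x k-sparse with ‖x‖₂ ≤ R. Let w = Σ_{i=1}^M αᵢ yᵢ xᵢ where each xᵢ ∈ ℝⁿ is k-sparse with ‖xᵢ‖₂ ≤ R, yᵢ ∈ {−1,1}, each αᵢ ≥ 0, and Σᵢ αᵢ ≤ C. Then the measurement-domain regularized loss of the projected classifier Aw satisfies E_{(x,y)∼D}[max(0, 1 − y⟨Aw, Ax⟩)] + ‖Aw‖₂²/(2C) ≤ E_{(x,y)∼D}[max(0, 1 − y⟨w, x⟩)] + ‖w‖₂²/(2C) + (9/2)·C R² ε. In particular, there is a classifier in the measurement domain whose regularized loss exceeds that of w in the data domain by at most O(C R² ε). -/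

import Mathlib

/-! By polarization, the Restricted Isometry Property of order `2k` gives
`|⟪Au, Av⟫ - ⟪u, v⟫| ≤ ε R²` for `k`-sparse `u`, `v` of norm at most `R`
(`IsRIP.abs_inner_sub_le`). Expanding the classifier `w = ∑ αᵢ yᵢ xᵢ` with `∑ αᵢ ≤ C`, this yields
`|⟪Aw, Av⟫ - ⟪w, v⟫| ≤ C R² ε`, so the hinge loss grows by at most `C R² ε`, and, by expanding
twice, `‖Aw‖² ≤ ‖w‖² + C² R² ε`, so the regularizer grows by at most `C R² ε / 2`. The total
`(3/2) C R² ε` is below the claimed `(9/2) C R² ε`. -/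

open Finset MeasureTheory RealInnerProductSpace

/-- A vector is `s`-sparse if it has at most `s` nonzero coordinates. -/
def SparseVec {n : ℕ} (s : ℕ) (x : EuclideanSpace ℝ (Fin n)) : Prop :=
  (Finset.univ.filter fun i => x i ≠ 0).card ≤ s

/-- Application of a matrix to a Euclidean vector. -/
noncomputable def matVec {m n : ℕ} (A : Matrix (Fin m) (Fin n) ℝ)
    (x : EuclideanSpace ℝ (Fin n)) : EuclideanSpace ℝ (Fin m) :=
  (EuclideanSpace.equiv (Fin m) ℝ).symm (A.mulVec ((EuclideanSpace.equiv (Fin n) ℝ) x))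

/-- `A` satisfies the Restricted Isometry Property of order `s` with constant `ε`. -/
def IsRIP {m n : ℕ} (s : ℕ) (ε : ℝ) (A : Matrix (Fin m) (Fin n) ℝ) : Prop :=
  ∀ v : EuclideanSpace ℝ (Fin n), SparseVec s v →
    (1 - ε) * ‖v‖ ^ 2 ≤ ‖matVec A v‖ ^ 2 ∧ ‖matVec A v‖ ^ 2 ≤ (1 + ε) * ‖v‖ ^ 2

/-- The true hinge loss `E_{(x,y)∼D}[max(0, 1 − y⟨w,x⟩)]` of a linear classifier. -/
noncomputable def hingeLoss {n : ℕ} (D : Measure (EuclideanSpace ℝ (Fin n) × ℝ))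
    (w : EuclideanSpace ℝ (Fin n)) : ℝ :=
  ∫ p, max 0 (1 - p.2 * ⟪w, p.1⟫) ∂D

/-- `matVec A` as a linear map. -/
noncomputable def matVecLin {m n : ℕ} (A : Matrix (Fin m) (Fin n) ℝ) :
    EuclideanSpace ℝ (Fin n) →ₗ[ℝ] EuclideanSpace ℝ (Fin m) where
  toFun := matVec A
  map_add' u v := by simp [matVec, Matrix.mulVec_add]
  map_smul' c u := by simp [matVec, Matrix.mulVec_smul]

theorem SparseVec.add {n s t : ℕ} {u v : EuclideanSpace ℝ (Fin n)}
    (hu : SparseVec s u) (hv : SparseVec t v) : SparseVec (s + t) (u + v) := by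
  unfold SparseVec at *
  refine le_trans (Finset.card_le_card ?_)
    ((Finset.card_union_le _ _).trans (Nat.add_le_add hu hv))
  intro i hi
  have hne := (Finset.mem_filter.mp hi).2
  rw [Finset.mem_union, Finset.mem_filter, Finset.mem_filter]
  by_contra! h
  exact hne (by simp [h.1 (Finset.mem_univ i), h.2 (Finset.mem_univ i)])

theorem SparseVec.neg {n s : ℕ} {u : EuclideanSpace ℝ (Fin n)}
    (hu : SparseVec s u) : SparseVec s (-u) := by
  simpa [SparseVec] using hu

/-- A restricted isometry of order `2k` almost preserves inner products of `k`-sparse vectors,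
by polarization applied to the `2k`-sparse vectors `u + v` and `u - v`. -/
theorem IsRIP.abs_inner_sub_le {m n k : ℕ} {ε R : ℝ} (hε : 0 ≤ ε)
    {A : Matrix (Fin m) (Fin n) ℝ} (hA : IsRIP (2 * k) ε A)
    {u v : EuclideanSpace ℝ (Fin n)} (hu : SparseVec k u) (hv : SparseVec k v)
    (huR : ‖u‖ ≤ R) (hvR : ‖v‖ ≤ R) :
    |⟪matVecLin A u, matVecLin A v⟫ - ⟪u, v⟫| ≤ R ^ 2 * ε := by
  have hadd := hA (u + v) (by rw [two_mul]; exact hu.add hv)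
  have hsub := hA (u - v) (by rw [two_mul, sub_eq_add_neg]; exact hu.add hv.neg)
  change _ ≤ ‖matVecLin A (u + v)‖ ^ 2 ∧ ‖matVecLin A (u + v)‖ ^ 2 ≤ _ at hadd
  change _ ≤ ‖matVecLin A (u - v)‖ ^ 2 ∧ ‖matVecLin A (u - v)‖ ^ 2 ≤ _ at hsub
  rw [map_add, norm_add_sq_real, norm_add_sq_real] at hadd
  rw [map_sub, norm_sub_sq_real, norm_sub_sq_real] at hsub
  have hu2 : ε * ‖u‖ ^ 2 ≤ ε * R ^ 2 := by gcongr
  have hv2 : ε * ‖v‖ ^ 2 ≤ ε * R ^ 2 := by gcongr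
  rw [abs_le]
  constructor <;> linarith [hadd.1, hadd.2, hsub.1, hsub.2]

/-- If a bilinear discrepancy is at most `b` on each `xᵢ`, it is at most `C b` on `∑ αᵢ yᵢ xᵢ`. -/
theorem abs_inner_sum_sub_le {m n M : ℕ} {C b : ℝ} (hb : 0 ≤ b)
    (L : EuclideanSpace ℝ (Fin n) →ₗ[ℝ] EuclideanSpace ℝ (Fin m))
    {x : Fin M → EuclideanSpace ℝ (Fin n)} {y α : Fin M → ℝ}
    (hy : ∀ i, y i = -1 ∨ y i = 1) (hα : ∀ i, 0 ≤ α i) (hαC : ∑ i, α i ≤ C)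
    (v : EuclideanSpace ℝ (Fin n))
    (h : ∀ i, |⟪L (x i), L v⟫ - ⟪x i, v⟫| ≤ b) :
    |⟪L (∑ i, (α i * y i) • x i), L v⟫ - ⟪∑ i, (α i * y i) • x i, v⟫| ≤ C * b := by
  have hexp : ⟪L (∑ i, (α i * y i) • x i), L v⟫ - ⟪∑ i, (α i * y i) • x i, v⟫
      = ∑ i, (α i * y i) * (⟪L (x i), L v⟫ - ⟪x i, v⟫) := by
    simp only [map_sum, map_smul, sum_inner, real_inner_smul_left, mul_sub,
      Finset.sum_sub_distrib]
  rw [hexp]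
  calc |∑ i, (α i * y i) * (⟪L (x i), L v⟫ - ⟪x i, v⟫)|
      ≤ ∑ i, |(α i * y i) * (⟪L (x i), L v⟫ - ⟪x i, v⟫)| := Finset.abs_sum_le_sum_abs _ _
    _ ≤ ∑ i, α i * b := by
        refine Finset.sum_le_sum fun i _ => ?_
        have hyi : |y i| = 1 := by rcases hy i with h | h <;> simp [h]
        rw [abs_mul, abs_mul, hyi, mul_one, abs_of_nonneg (hα i)]
        exact mul_le_mul_of_nonneg_left (h i) (hα i)
    _ = (∑ i, α i) * b := by rw [Finset.sum_mul]
    _ ≤ C * b := mul_le_mul_of_nonneg_right hαC hb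

theorem integrable_hinge {n : ℕ} {R : ℝ}
    (D : Measure (EuclideanSpace ℝ (Fin n) × ℝ)) [IsProbabilityMeasure D]
    (hD : ∀ᵐ p ∂D, ‖p.1‖ ≤ R ∧ (p.2 = -1 ∨ p.2 = 1)) (w : EuclideanSpace ℝ (Fin n)) :
    Integrable (fun p => max 0 (1 - p.2 * ⟪w, p.1⟫)) D := by
  have hcont : Continuous fun p : EuclideanSpace ℝ (Fin n) × ℝ =>
      max 0 (1 - p.2 * ⟪w, p.1⟫) := by fun_prop
  refine Integrable.of_bound hcont.aestronglyMeasurable (1 + ‖w‖ * R) ?_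
  filter_upwards [hD] with p hp
  have h1 : |⟪w, p.1⟫| ≤ ‖w‖ * R :=
    (abs_real_inner_le_norm _ _).trans (mul_le_mul_of_nonneg_left hp.1 (norm_nonneg _))
  obtain ⟨h2, h3⟩ := abs_le.mp h1
  rw [Real.norm_of_nonneg (le_max_left _ _)]
  rcases hp.2 with h | h <;> rw [h] <;> refine max_le ?_ ?_ <;> linarith

/-- Projecting a data-domain SVM-type classifier `w = Σᵢ αᵢ yᵢ xᵢ` into the measurement
domain increases the true regularized loss by at most `(9/2)·C R² ε = O(C R² ε)`. -/
theorem measurement_domain_regularized_loss_bound {m n k : ℕ}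
    (ε : ℝ) (hε0 : 0 < ε) (hε1 : ε < 1)
    (A : Matrix (Fin m) (Fin n) ℝ) (hA : IsRIP (2 * k) ε A)
    (C R : ℝ) (hC : 0 < C) (hR : 0 < R)
    (D : Measure (EuclideanSpace ℝ (Fin n) × ℝ)) (hD : IsProbabilityMeasure D)
    (hDsupp : ∀ᵐ p ∂D, SparseVec k p.1 ∧ ‖p.1‖ ≤ R ∧ (p.2 = -1 ∨ p.2 = 1))
    (M : ℕ) (x : Fin M → EuclideanSpace ℝ (Fin n)) (y : Fin M → ℝ) (α : Fin M → ℝ)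
    (hxk : ∀ i, SparseVec k (x i)) (hxR : ∀ i, ‖x i‖ ≤ R)
    (hy : ∀ i, y i = -1 ∨ y i = 1)
    (hα : ∀ i, 0 ≤ α i) (hαC : ∑ i, α i ≤ C) :
    (∫ p, max 0 (1 - p.2 * ⟪matVec A (∑ i, (α i * y i) • x i), matVec A p.1⟫) ∂D) +
        ‖matVec A (∑ i, (α i * y i) • x i)‖ ^ 2 / (2 * C) ≤
      hingeLoss D (∑ i, (α i * y i) • x i) +
        ‖∑ i, (α i * y i) • x i‖ ^ 2 / (2 * C) + (9 / 2) * C * R ^ 2 * ε := by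
  set w := ∑ i, (α i * y i) • x i with hw
  have hb : 0 ≤ R ^ 2 * ε := by positivity
  have hinner : ∀ v, SparseVec k v → ‖v‖ ≤ R →
      |⟪matVecLin A w, matVecLin A v⟫ - ⟪w, v⟫| ≤ C * (R ^ 2 * ε) := fun v hv hvR =>
    abs_inner_sum_sub_le hb _ hy hα hαC v fun i =>
      hA.abs_inner_sub_le hε0.le (hxk i) hv (hxR i) hvR
  have hnorm : ‖matVecLin A w‖ ^ 2 ≤ ‖w‖ ^ 2 + C * (C * (R ^ 2 * ε)) := by
    have h := abs_inner_sum_sub_le (mul_nonneg hC.le hb) (matVecLin A) hy hα hαC w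
      fun i => by
        rw [real_inner_comm, real_inner_comm w]
        exact hinner (x i) (hxk i) (hxR i)
    rw [← hw, real_inner_self_eq_norm_sq, real_inner_self_eq_norm_sq] at h
    linarith [(abs_le.mp h).2]
  have hreg : ‖matVecLin A w‖ ^ 2 / (2 * C) ≤ ‖w‖ ^ 2 / (2 * C) + C * (R ^ 2 * ε) / 2 := by
    rw [div_le_iff₀ (by positivity)]
    refine hnorm.trans (le_of_eq ?_)
    field_simp
  have hint := integrable_hinge D (hDsupp.mono fun p hp => hp.2) w
  have hloss : (∫ p, max 0 (1 - p.2 * ⟪matVecLin A w, matVecLin A p.1⟫) ∂D)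
      ≤ hingeLoss D w + C * (R ^ 2 * ε) := by
    calc _ ≤ ∫ p, (max 0 (1 - p.2 * ⟪w, p.1⟫) + C * (R ^ 2 * ε)) ∂D := by
          refine integral_mono_of_nonneg (Filter.Eventually.of_forall fun p => le_max_left _ _)
            (hint.add (integrable_const _)) ?_
          filter_upwards [hDsupp] with p hp
          obtain ⟨h1, h2⟩ := abs_le.mp (hinner p.1 hp.1 hp.2.1)
          have hle := le_max_right 0 (1 - p.2 * ⟪w, p.1⟫)
          have hnn := le_max_left 0 (1 - p.2 * ⟪w, p.1⟫)
          have hCb := mul_nonneg hC.le hb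
          refine max_le (by linarith) ?_
          rcases hp.2.2 with h | h <;> rw [h] at hle ⊢ <;> linarith
      _ = hingeLoss D w + C * (R ^ 2 * ε) := by
          rw [integral_add hint (integrable_const _)]
          simp [hingeLoss]
  change (∫ p, max 0 (1 - p.2 * ⟪matVecLin A w, matVecLin A p.1⟫) ∂D)
    + ‖matVecLin A w‖ ^ 2 / (2 * C) ≤ _
  linarith [mul_nonneg hC.le hb]
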